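/- (Corollary 1.) Suppose either Assumption 1.1 or Assumption 1.2 holds, and suppose that for all sufficiently large n and every C ⊆ V_n with |C| = r(n), max over nonempty D ⊆ C of E_0[e(D)]·h(λ_C − 1)/(|D|·log(n/|D|)) ≥ 1 + ε, where ε > 0 is the constant used in the scan test. Then the known-probability scan test is asymptotically powerful: R_n(ψ^{scan}_n) → 0 as n → ∞. -/

import Mathlib

/-!
The scan statistic of `D` exceeds a level `K` under the null with probability at most
`exp (-K |D| log (n/|D|))` (`scanStat_tail`, a Chernoff bound), whereas there are at most
`(e n / k) ^ k` sets of size `k`. At level `K = 1 + ε/2` the union bound is a geometric series of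
ratio `exp (1 - (ε/2) log (n/r))`, and both assumptions give `log (n/r) → ∞` (`typeI_le`).

Under the alternative at `C`, take `D ⊆ C` attaining the scan condition. There `e(D)` has mean
`λ μ` with `μ = E₀[e(D)]`. Unless `e(D)` falls short of its mean by `η (λ - 1) μ`, with
`η = ε / (4 (1 + ε))`, the statistic of `D` stays above `(1 - 2η)(1 + ε) = 1 + ε/2`, because
`h ((1 - η) x) ≥ (1 - 2η) h x` (`hFun_shrink`). The shortfall has probability at most
`exp (-η² (λ - 1)² μ / (2λ))`, which tends to zero as soon as `|D| log (n/|D|)` and `λ μ` both tend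
to infinity (`typeII_le`).

The divergence of `λ μ` is where the assumptions matter. The scan condition and
`h (λ - 1) ≤ λ log λ` give `λ μ ≥ |D| log (n/r) / log λ`, while averaging `λ p ≤ 1` over `C` gives
`λ ≤ 1 / p̄_C`. In the first regime a set `D` that is too small is replaced by `C`, which then
satisfies the scan condition as well (`exists_good_of_11`); in the second regime any `D` works
(`exists_good_of_12`).
-/

open Finset Filter Asymptotics

namespace CommunityDetection

/-- Potential edges of a graph on `Fin n`: ordered pairs `i < j` of vertices. -/
abbrev Edge (n : ℕ) := {q : Fin n × Fin n // q.1 < q.2}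

/-- A realization of the random graph: presence/absence of each potential edge. -/
abbrev Config (n : ℕ) := Edge n → Bool

/-- Probability of the event `E` when the edge indicators are independent Bernoulli
random variables with parameters `w`. -/
noncomputable def prob (n : ℕ) (w : Edge n → ℝ) (E : Set (Config n)) : ℝ :=
  ∑ a : Config n, E.indicator (fun a => ∏ e : Edge n, (if a e then w e else 1 - w e)) a

/-- Null hypothesis edge parameters. -/
def nullW (n : ℕ) (p : Fin n → Fin n → ℝ) : Edge n → ℝ := fun e => p e.1.1 e.1.2

/-- Alternative hypothesis edge parameters: a community `C` with scaling `lam`. -/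
def altW (n : ℕ) (p : Fin n → Fin n → ℝ) (lam : ℝ) (C : Finset (Fin n)) : Edge n → ℝ :=
  fun e => if e.1.1 ∈ C ∧ e.1.2 ∈ C then lam * p e.1.1 e.1.2 else p e.1.1 e.1.2

/-- The number of edges `e(D)` inside a vertex set `D`. -/
def eCount (n : ℕ) (D : Finset (Fin n)) (a : Config n) : ℝ :=
  ∑ e : Edge n, if e.1.1 ∈ D ∧ e.1.2 ∈ D ∧ a e = true then 1 else 0

/-- The expected number of edges `E₀[e(D)]` inside `D` under the null hypothesis. -/
def expCount (n : ℕ) (p : Fin n → Fin n → ℝ) (D : Finset (Fin n)) : ℝ :=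
  ∑ e : Edge n, if e.1.1 ∈ D ∧ e.1.2 ∈ D then p e.1.1 e.1.2 else 0

/-- The average edge probability `p̄_D` of `D`. -/
noncomputable def pbar (n : ℕ) (p : Fin n → Fin n → ℝ) (D : Finset (Fin n)) : ℝ :=
  expCount n p D / (D.card.choose 2 : ℝ)

/-- The entropy function `h(x) = (x+1)log(x+1) - x`. -/
noncomputable def hFun (x : ℝ) : ℝ := (x + 1) * Real.log (x + 1) - x

/-- The worst-case risk of a test `ψ`: type-I error plus the worst type-II error over
all communities of size `r`. -/
noncomputable def risk (n r : ℕ) (p : Fin n → Fin n → ℝ) (lam : Finset (Fin n) → ℝ)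
    (ψ : Config n → Bool) : ℝ :=
  prob n (nullW n p) {a | ψ a = true} +
    sSup {x | ∃ C : Finset (Fin n), C.card = r ∧
      x = prob n (altW n p (lam C) C) {a | ψ a = false}}

/-- `max_{∅ ≠ D ⊆ C} E₀[e(D)] h(λ_C - 1) / (|D| log(n/|D|))`. -/
noncomputable def condSup (n : ℕ) (p : Fin n → Fin n → ℝ) (lamC : ℝ) (C : Finset (Fin n)) : ℝ :=
  sSup {x | ∃ D : Finset (Fin n), D ⊆ C ∧ D.Nonempty ∧
    x = expCount n p D * hFun (lamC - 1) / ((D.card : ℝ) * Real.log ((n : ℝ) / (D.card : ℝ)))}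

/-- Assumption 1.1. -/
def Assumption11 (p : ∀ n, Fin n → Fin n → ℝ) (r : ℕ → ℕ) : Prop :=
  ∃ δ : ℝ, δ ∈ Set.Ioo (0 : ℝ) (1/2) ∧
    ((fun n => (r n : ℝ)) =O[atTop] fun n => (n : ℝ) ^ ((1 : ℝ)/2 - δ)) ∧
    (∃ γ : ℕ → ℝ, (∀ n, 0 < γ n) ∧ Tendsto γ atTop (nhds 0) ∧
      ∀ n : ℕ, ∀ C : Finset (Fin n), C.card = r n → ∀ D : Finset (Fin n), D ⊆ C → D.Nonempty →
        (D.card : ℝ) < (r n : ℝ) / ((n : ℝ) / (r n : ℝ)) ^ (γ n) →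
        (D.card : ℝ) * pbar n (p n) D / ((r n : ℝ) * pbar n (p n) C) ≤ δ) ∧
    ((fun n => sSup {x | ∃ C : Finset (Fin n), C.card = r n ∧ x = 1 / pbar n (p n) C})
      =o[atTop] fun n => (r n : ℝ) / Real.log ((n : ℝ) / (r n : ℝ)))

/-- Assumption 1.2. -/
def Assumption12 (p : ∀ n, Fin n → Fin n → ℝ) (r : ℕ → ℕ) : Prop :=
  Tendsto (fun n => Real.log (r n : ℝ) / Real.log (n : ℝ)) atTop (nhds 0) ∧
  ((fun n => sSup {x | ∃ C : Finset (Fin n), C.card = r n ∧ x = Real.log (1 / pbar n (p n) C)})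
    =o[atTop] fun n => Real.log ((n : ℝ) / (r n : ℝ)) / Real.log (r n : ℝ))

/-- Assumption 2. -/
def Assumption2 (p : ∀ n, Fin n → Fin n → ℝ) (r : ℕ → ℕ) (lam : ∀ n, Finset (Fin n) → ℝ) :
    Prop :=
  Tendsto (fun n => sSup {x | ∃ C : Finset (Fin n), C.card = r n ∧
    ∃ i ∈ C, ∃ j ∈ C, i ≠ j ∧ x = (lam n C)^2 * p n i j}) atTop (nhds 0)

/-- The known-probability scan statistic `Ψ_D`. -/
noncomputable def scanStat (n : ℕ) (p : Fin n → Fin n → ℝ) (D : Finset (Fin n))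
    (a : Config n) : ℝ :=
  if 0 < expCount n p D then
    expCount n p D * hFun (max (eCount n D a / expCount n p D - 1) 0) /
      ((D.card : ℝ) * Real.log ((n : ℝ) / (D.card : ℝ)))
  else 0

/-- The known-probability scan test. -/
noncomputable def scanTest (n r : ℕ) (p : Fin n → Fin n → ℝ) (ε : ℝ) (a : Config n) : Bool :=
  if 1 + ε / 2 ≤
      sSup {x | ∃ D : Finset (Fin n), D.Nonempty ∧ D.card ≤ r ∧ x = scanStat n p D a}
  then true else false

/-- The objective defining the most informative subgraph `D*_C`. -/
noncomputable def objective (n : ℕ) (p : Fin n → Fin n → ℝ) (D : Finset (Fin n)) : ℝ :=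
  expCount n p D / ((D.card : ℝ) * Real.log ((n : ℝ) / (D.card : ℝ)))

/-- The number of edges `e(D, -D)` between `D` and its complement. -/
def eCross (n : ℕ) (D : Finset (Fin n)) (a : Config n) : ℝ :=
  ∑ e : Edge n,
    if ((e.1.1 ∈ D ∧ e.1.2 ∉ D) ∨ (e.1.1 ∉ D ∧ e.1.2 ∈ D)) ∧ a e = true then 1 else 0

/-- The estimator `ê(D)` of `E₀[e(D)]`. -/
noncomputable def estCount (n : ℕ) (D : Finset (Fin n)) (a : Config n) : ℝ :=
  (Real.sqrt (eCount n Finset.univ a) -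
    Real.sqrt (eCount n Finset.univ a - 2 * eCross n D a))^2 / 4

/-- The thresholded estimator `ê_τ(D)`. -/
noncomputable def estCountTr (n : ℕ) (D : Finset (Fin n)) (a : Config n) : ℝ :=
  max (estCount n D a) ((D.card : ℝ)^2 / (n : ℝ) * (Real.log ((n : ℝ) / (D.card : ℝ)))^4)

/-- The unknown-probability scan statistic `Ψᵘ_D`. -/
noncomputable def scanStatU (n : ℕ) (D : Finset (Fin n)) (a : Config n) : ℝ :=
  estCountTr n D a * hFun (max (eCount n D a / estCountTr n D a - 1) 0) /
    ((D.card : ℝ) * Real.log ((n : ℝ) / (D.card : ℝ)))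

/-- The unknown-probability scan test. -/
noncomputable def scanTestU (n r : ℕ) (ε : ℝ) (a : Config n) : Bool :=
  if 1 + ε / 3 ≤
      sSup {x | ∃ D : Finset (Fin n),
        (r : ℝ) ^ ((1 : ℝ)/3) ≤ (D.card : ℝ) ∧ D.card ≤ r ∧ x = scanStatU n D a}
  then true else false

/-- Assumption 3: maximal inhomogeneity of rank-1 weights. -/
def Assumption3 (θ : ∀ n, Fin n → ℝ) (r : ℕ → ℕ) : Prop :=
  (fun n => (sSup (Set.range (θ n)) / sInf (Set.range (θ n)))^2) =o[atTop]
    fun n => min ((r n : ℝ) ^ ((2 : ℝ)/3)) ((n : ℝ) / (r n : ℝ) * (sInf (Set.range (θ n)))^2)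


/-! ### The entropy function -/

/-- `h` lies above its tangent lines, whose slope at `x` is `log (1 + x)`. -/
lemma hFun_tangent {x y : ℝ} (hx : 0 ≤ x) (hy : 0 ≤ y) :
    hFun x + Real.log (x + 1) * (y - x) ≤ hFun y := by
  have hx1 : 0 < x + 1 := by linarith
  have hy1 : 0 < y + 1 := by linarith
  have h := Real.one_sub_inv_le_log_of_pos (div_pos hy1 hx1)
  rw [Real.log_div hy1.ne' hx1.ne', inv_div] at h
  have h2 := mul_le_mul_of_nonneg_left h hy1.le
  have h3 : (y + 1) * (1 - (x + 1) / (y + 1)) = y - x := by field_simp; ring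
  rw [h3] at h2
  unfold hFun
  nlinarith

lemma hFun_mono {x y : ℝ} (hx : 0 ≤ x) (hxy : x ≤ y) : hFun x ≤ hFun y := by
  have h := hFun_tangent hx (hx.trans hxy)
  have h2 := mul_nonneg (Real.log_nonneg (by linarith : 1 ≤ x + 1)) (sub_nonneg.2 hxy)
  linarith

@[simp] lemma hFun_zero : hFun 0 = 0 := by simp [hFun]

lemma hFun_nonneg {x : ℝ} (hx : 0 ≤ x) : 0 ≤ hFun x := by
  simpa using hFun_mono le_rfl hx

/-- Shrinking the argument by a factor `1 - η` costs at most a factor `1 - 2η`: the tangent bound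
at `x`, combined with `x log (1 + x) ≤ 2 h(x)`. -/
lemma hFun_shrink {x η : ℝ} (hx : 0 ≤ x) (hη : 0 ≤ η) (hη1 : η ≤ 1) :
    (1 - 2 * η) * hFun x ≤ hFun ((1 - η) * x) := by
  have h := hFun_tangent hx (mul_nonneg (sub_nonneg.2 hη1) hx)
  have h2 := Real.le_log_one_add_of_nonneg hx
  rw [div_le_iff₀ (by linarith), add_comm 1 x] at h2
  have h3 : x * Real.log (x + 1) ≤ 2 * hFun x := by unfold hFun; linarith
  nlinarith [mul_le_mul_of_nonneg_left h3 hη]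

lemma hFun_le_sq {x : ℝ} (hx : 0 ≤ x) : hFun x ≤ x ^ 2 := by
  have h := Real.log_le_sub_one_of_pos (by linarith : 0 < x + 1)
  unfold hFun
  nlinarith

lemma hFun_sub_one_le {l : ℝ} (hl : 1 ≤ l) : hFun (l - 1) ≤ l * Real.log l := by
  unfold hFun
  rw [sub_add_cancel]
  linarith

/-! ### Product Bernoulli measures and Chernoff bounds -/

section Prob

variable {n : ℕ} {w : Edge n → ℝ}

lemma weight_nonneg (hw : ∀ e, w e ∈ Set.Icc (0 : ℝ) 1) (a : Config n) :
    0 ≤ ∏ e : Edge n, (if a e then w e else 1 - w e) := by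
  refine Finset.prod_nonneg fun e _ => ?_
  split_ifs
  · exact (hw e).1
  · linarith [(hw e).2]

lemma prob_nonneg (hw : ∀ e, w e ∈ Set.Icc (0 : ℝ) 1) (E : Set (Config n)) :
    0 ≤ prob n w E :=
  Finset.sum_nonneg fun a _ => Set.indicator_nonneg (fun a _ => weight_nonneg hw a) a

lemma prob_mono (hw : ∀ e, w e ∈ Set.Icc (0 : ℝ) 1) {E F : Set (Config n)} (h : E ⊆ F) :
    prob n w E ≤ prob n w F :=
  Finset.sum_le_sum fun a _ =>
    Set.indicator_le_indicator_of_subset h (fun a => weight_nonneg hw a) a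

/-- Markov's inequality. -/
lemma prob_le_sum (hw : ∀ e, w e ∈ Set.Icc (0 : ℝ) 1) {E : Set (Config n)} (f : Config n → ℝ)
    (hf : ∀ a, 0 ≤ f a) (hE : ∀ a ∈ E, 1 ≤ f a) :
    prob n w E ≤ ∑ a : Config n, f a * ∏ e : Edge n, (if a e then w e else 1 - w e) := by
  refine Finset.sum_le_sum fun a _ => ?_
  by_cases ha : a ∈ E
  · rw [Set.indicator_of_mem ha]
    exact le_mul_of_one_le_left (weight_nonneg hw a) (hE a ha)
  · rw [Set.indicator_of_notMem ha]
    exact mul_nonneg (hf a) (weight_nonneg hw a)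

/-- Union bound over a finite family of events. -/
lemma prob_union {ι : Type*} (hw : ∀ e, w e ∈ Set.Icc (0 : ℝ) 1) (s : Finset ι)
    (E : Set (Config n)) (F : ι → Set (Config n)) (h : ∀ a ∈ E, ∃ i ∈ s, a ∈ F i) :
    prob n w E ≤ ∑ i ∈ s, prob n w (F i) := by
  unfold prob
  rw [Finset.sum_comm]
  refine Finset.sum_le_sum fun a _ => ?_
  have h0 : ∀ i ∈ s, 0 ≤ (F i).indicator
      (fun a => ∏ e : Edge n, (if a e then w e else 1 - w e)) a :=
    fun i _ => Set.indicator_nonneg (fun a _ => weight_nonneg hw a) a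
  by_cases ha : a ∈ E
  · obtain ⟨i, hi, hai⟩ := h a ha
    refine le_trans ?_ (Finset.single_le_sum h0 hi)
    rw [Set.indicator_of_mem ha, Set.indicator_of_mem hai]
  · rw [Set.indicator_of_notMem ha]
    exact Finset.sum_nonneg h0

/-- The exponential moment of `e(D)` is at most that of a Poisson variable of the same mean. -/
lemma mgf_le (hw : ∀ e, w e ∈ Set.Icc (0 : ℝ) 1) (D : Finset (Fin n)) (s : ℝ) :
    ∑ a : Config n, Real.exp (s * eCount n D a) *
        ∏ e : Edge n, (if a e then w e else 1 - w e) ≤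
      Real.exp ((Real.exp s - 1) *
        ∑ e : Edge n, if e.1.1 ∈ D ∧ e.1.2 ∈ D then w e else 0) := by
  classical
  let g : Edge n → Bool → ℝ := fun e b =>
    Real.exp (s * if e.1.1 ∈ D ∧ e.1.2 ∈ D ∧ b = true then 1 else 0) *
      (if b then w e else 1 - w e)
  have h1 : ∀ a : Config n, Real.exp (s * eCount n D a) *
      ∏ e : Edge n, (if a e then w e else 1 - w e) = ∏ e : Edge n, g e (a e) := by
    intro a
    rw [Finset.prod_mul_distrib, ← Real.exp_sum, eCount, Finset.mul_sum]
  have h2 := Finset.prod_univ_sum (fun _ : Edge n => (Finset.univ : Finset Bool)) g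
  rw [Fintype.piFinset_univ] at h2
  rw [Finset.sum_congr rfl fun a _ => h1 a, ← h2, Finset.mul_sum, Real.exp_sum]
  simp only [g]
  refine Finset.prod_le_prod (fun e _ => ?_) (fun e _ => ?_)
  · refine Finset.sum_nonneg fun b _ => mul_nonneg (Real.exp_pos _).le ?_
    cases b
    · simpa using (hw e).2
    · simpa using (hw e).1
  · by_cases he : e.1.1 ∈ D ∧ e.1.2 ∈ D
    · have h2 := Real.add_one_le_exp ((Real.exp s - 1) * w e)
      simp only [Fintype.sum_bool, he, and_self]
      simp only [true_and, if_true, mul_one, Bool.false_eq_true, if_false, mul_zero,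
        Real.exp_zero, one_mul]
      linarith
    · have he' : ∀ b : Bool, ¬(e.1.1 ∈ D ∧ e.1.2 ∈ D ∧ b = true) :=
        fun b hb => he ⟨hb.1, hb.2.1⟩
      simp [he, he']

/-- Chernoff's bound for the upper tail, with mean `μ` and threshold `(1 + t) μ`. -/
lemma upper_tail (hw : ∀ e, w e ∈ Set.Icc (0 : ℝ) 1) (D : Finset (Fin n)) {μ t : ℝ}
    (hμ : μ = ∑ e : Edge n, if e.1.1 ∈ D ∧ e.1.2 ∈ D then w e else 0) (ht : 0 ≤ t) :
    prob n w {a | (t + 1) * μ ≤ eCount n D a} ≤ Real.exp (-(μ * hFun t)) := by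
  have hs : 0 ≤ Real.log (t + 1) := Real.log_nonneg (by linarith)
  refine (prob_le_sum hw (fun a => Real.exp (-(Real.log (t + 1) * ((t + 1) * μ))) *
    Real.exp (Real.log (t + 1) * eCount n D a)) (fun a => by positivity) ?_).trans ?_
  · intro a ha
    rw [← Real.exp_add, Real.one_le_exp_iff]
    have ha' : (t + 1) * μ ≤ eCount n D a := ha
    have := mul_le_mul_of_nonneg_left ha' hs
    linarith
  · simp only [mul_assoc]
    rw [← Finset.mul_sum]
    refine (mul_le_mul_of_nonneg_left (mgf_le hw D _) (Real.exp_pos _).le).trans ?_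
    rw [← hμ, ← Real.exp_add, Real.exp_log (by linarith)]
    apply le_of_eq
    congr 1
    unfold hFun
    ring

lemma exp_neg_le_quadratic {s : ℝ} (hs : 0 ≤ s) : Real.exp (-s) ≤ 1 - s + s ^ 2 / 2 := by
  have h := Real.quadratic_le_exp_of_nonneg hs
  rw [Real.exp_neg, inv_le_iff_one_le_mul₀ (Real.exp_pos _)]
  have h2 : 0 ≤ 1 - s + s ^ 2 / 2 := by nlinarith [sq_nonneg (s - 1)]
  nlinarith [mul_le_mul_of_nonneg_left h h2, sq_nonneg (s ^ 2)]

/-- Sub-Gaussian bound for the lower tail of `e(D)` around its mean `m`. -/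
lemma lower_tail (hw : ∀ e, w e ∈ Set.Icc (0 : ℝ) 1) (D : Finset (Fin n)) {m t : ℝ}
    (hm : m = ∑ e : Edge n, if e.1.1 ∈ D ∧ e.1.2 ∈ D then w e else 0) (hm0 : 0 < m)
    (ht : 0 ≤ t) :
    prob n w {a | eCount n D a ≤ m - t} ≤ Real.exp (-(t ^ 2 / (2 * m))) := by
  have hs : 0 ≤ t / m := by positivity
  refine (prob_le_sum hw (fun a => Real.exp ((t / m) * (m - t)) *
    Real.exp (-(t / m) * eCount n D a)) (fun a => by positivity) ?_).trans ?_
  · intro a ha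
    rw [← Real.exp_add, Real.one_le_exp_iff]
    have ha' : eCount n D a ≤ m - t := ha
    have := mul_le_mul_of_nonneg_left ha' hs
    linarith
  · simp only [mul_assoc]
    rw [← Finset.mul_sum]
    refine (mul_le_mul_of_nonneg_left (mgf_le hw D _) (Real.exp_pos _).le).trans ?_
    rw [← hm, ← Real.exp_add]
    apply Real.exp_le_exp.2
    have h := mul_le_mul_of_nonneg_right (exp_neg_le_quadratic hs) hm0.le
    have e1 : t / m * (m - t) + (1 - t / m + (t / m) ^ 2 / 2) * m - m = -(t ^ 2 / (2 * m)) := by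
      field_simp
      ring
    linarith

end Prob

/-! ### Type I error -/

section Fixed

variable {n : ℕ} {p : Fin n → Fin n → ℝ}

lemma nullW_mem (hp : ∀ i j : Fin n, i ≠ j → p i j ∈ Set.Icc (0 : ℝ) 1) (e : Edge n) :
    nullW n p e ∈ Set.Icc (0 : ℝ) 1 :=
  hp _ _ (ne_of_lt e.2)

/-- Under the null, `E₀[e(D)] h((e(D)/E₀[e(D)] - 1)₊)` has an exponential tail: the event that it
exceeds `c` is an upper-tail event of `e(D)`, whose threshold is the smallest value of `e(D)` on
that event. -/
lemma scanStat_tail (hp : ∀ i j : Fin n, i ≠ j → p i j ∈ Set.Icc (0 : ℝ) 1)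
    (D : Finset (Fin n)) {c K : ℝ} (hc : 0 < c) (hK : c = K * ((D.card : ℝ) *
      Real.log ((n : ℝ) / (D.card : ℝ)))) (hK0 : 0 < K) :
    prob n (nullW n p) {a | K ≤ scanStat n p D a} ≤ Real.exp (-c) := by
  classical
  have hw := nullW_mem hp
  rcases Set.eq_empty_or_nonempty {a | K ≤ scanStat n p D a} with h0 | hne
  · rw [h0]
    simp [prob, (Real.exp_pos _).le]
  obtain ⟨a₀, ha₀, hmin⟩ := Set.exists_min_image {a | K ≤ scanStat n p D a} (eCount n D)
    (Set.toFinite _) hne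
  have ha₀' : K ≤ scanStat n p D a₀ := ha₀
  have hden : 0 < (D.card : ℝ) * Real.log ((n : ℝ) / (D.card : ℝ)) := by
    by_contra h
    nlinarith
  unfold scanStat at ha₀'
  split_ifs at ha₀' with hμ
  · rw [le_div_iff₀ hden, ← hK] at ha₀'
    set t := max (eCount n D a₀ / expCount n p D - 1) 0 with ht
    have ht0 : 0 < t := by
      rcases (le_max_right (eCount n D a₀ / expCount n p D - 1) 0).lt_or_eq with h | h
      · exact h
      · rw [← ht] at h
        rw [← h, hFun_zero] at ha₀'
        linarith
    have ht1 : t = eCount n D a₀ / expCount n p D - 1 := by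
      rcases max_choice (eCount n D a₀ / expCount n p D - 1) 0 with h | h
      · exact h
      · rw [← ht] at h
        linarith
    have hX : (t + 1) * expCount n p D = eCount n D a₀ := by
      rw [ht1]
      field_simp
      ring
    refine (prob_mono hw ?_).trans ((upper_tail hw D (μ := expCount n p D) rfl ht0.le).trans ?_)
    · intro a ha
      change (t + 1) * expCount n p D ≤ eCount n D a
      rw [hX]
      exact hmin a ha
    · exact Real.exp_le_exp.2 (neg_le_neg ha₀')
  · linarith

lemma choose_le_exp {k : ℕ} (hk : 1 ≤ k) (hkn : k ≤ n) :
    (n.choose k : ℝ) ≤ Real.exp (k * (1 + Real.log ((n : ℝ) / k))) := by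
  have hk0 : (0 : ℝ) < k := by exact_mod_cast hk
  have hn0 : (0 : ℝ) < n := by exact_mod_cast (by omega : 0 < n)
  have h1 := Nat.choose_le_pow_div (α := ℝ) k n
  have h2 := Real.pow_div_factorial_le_exp (k : ℝ) hk0.le k
  have h3 : Real.exp (k * (1 + Real.log ((n : ℝ) / k))) = Real.exp k * ((n : ℝ) / k) ^ k := by
    rw [mul_add, Real.exp_add, mul_one, ← Real.log_pow, Real.exp_log (by positivity)]
  rw [h3]
  refine h1.trans ?_
  calc (n : ℝ) ^ k / k.factorial = ((k : ℝ) ^ k / k.factorial) * ((n : ℝ) / k) ^ k := by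
        rw [div_pow]
        field_simp
    _ ≤ _ := mul_le_mul_of_nonneg_right h2 (by positivity)

lemma log_div_mono {k r : ℕ} (hk : 1 ≤ k) (hkr : k ≤ r) (hn : 1 ≤ n) :
    Real.log ((n : ℝ) / r) ≤ Real.log ((n : ℝ) / k) := by
  have hk0 : (0 : ℝ) < k := by exact_mod_cast hk
  have hr0 : (0 : ℝ) < r := by exact_mod_cast (by omega : 0 < r)
  have hn0 : (0 : ℝ) < n := by exact_mod_cast hn
  refine Real.log_le_log (by positivity) ?_
  gcongr

lemma log_div_pos {k : ℕ} (hk : 1 ≤ k) (hkn : k < n) : 0 < Real.log ((n : ℝ) / k) := by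
  have hk0 : (0 : ℝ) < k := by exact_mod_cast hk
  refine Real.log_pos ?_
  rw [one_lt_div hk0]
  exact_mod_cast hkn

lemma scanSet_finite (r : ℕ) (a : Config n) :
    {x | ∃ D : Finset (Fin n), D.Nonempty ∧ D.card ≤ r ∧ x = scanStat n p D a}.Finite := by
  refine (Set.finite_range fun D : Finset (Fin n) => scanStat n p D a).subset ?_
  rintro x ⟨D, -, -, rfl⟩
  exact ⟨D, rfl⟩

/-- The type I error is at most a geometric series: the union bound over the at most
`(en/k)^k` sets of size `k` costs less than the exponent `(1 + ε/2) k log(n/k)` gains. -/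
lemma typeI_le (hp : ∀ i j : Fin n, i ≠ j → p i j ∈ Set.Icc (0 : ℝ) 1) {r : ℕ} (hr1 : 1 ≤ r)
    (hrn : r < n) {ε : ℝ} (hε : 0 < ε) {q : ℝ}
    (hq : q = Real.exp (1 - ε / 2 * Real.log ((n : ℝ) / r))) (hq2 : q ≤ 1 / 2) :
    prob n (nullW n p) {a | scanTest n r p ε a = true} ≤ 2 * q := by
  classical
  have hw := nullW_mem hp
  have hq0 : 0 < q := hq ▸ Real.exp_pos _
  let f : ℕ → ℝ := fun k => if 1 ≤ k ∧ k ≤ r then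
    Real.exp (-((1 + ε / 2) * (k * Real.log ((n : ℝ) / k)))) else 0
  have hunion : prob n (nullW n p) {a | scanTest n r p ε a = true} ≤
      ∑ D ∈ (Finset.univ : Finset (Fin n)).powerset with (1 ≤ D.card ∧ D.card ≤ r),
        prob n (nullW n p) {a | 1 + ε / 2 ≤ scanStat n p D a} := by
    refine prob_union hw _ _ _ ?_
    intro a ha
    have ha' : scanTest n r p ε a = true := ha
    unfold scanTest at ha'
    split_ifs at ha' with h
    have hne : {x | ∃ D : Finset (Fin n), D.Nonempty ∧ D.card ≤ r ∧
        x = scanStat n p D a}.Nonempty :=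
      ⟨_, {⟨0, by omega⟩}, Finset.singleton_nonempty _, by simpa using hr1, rfl⟩
    obtain ⟨D, hD, hDr, hDx⟩ := hne.csSup_mem (scanSet_finite r a)
    refine ⟨D, ?_, ?_⟩
    · simp only [Finset.powerset_univ, Finset.mem_filter, Finset.mem_univ, true_and]
      exact ⟨hD.card_pos, hDr⟩
    · change 1 + ε / 2 ≤ scanStat n p D a
      rw [← hDx]
      exact h
  refine hunion.trans ?_
  rw [Finset.sum_filter]
  have hterm : ∀ D ∈ (Finset.univ : Finset (Fin n)).powerset,
      (if 1 ≤ D.card ∧ D.card ≤ r then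
        prob n (nullW n p) {a | 1 + ε / 2 ≤ scanStat n p D a} else 0) ≤ f D.card := by
    intro D _
    simp only [f]
    split_ifs with h
    · have hlog := log_div_pos h.1 (lt_of_le_of_lt h.2 hrn)
      have hk0 : (0 : ℝ) < D.card := by exact_mod_cast h.1
      exact scanStat_tail hp D (by positivity) rfl (by positivity)
    · exact le_rfl
  refine (Finset.sum_le_sum hterm).trans ?_
  rw [Finset.sum_powerset_apply_card, Finset.card_univ, Fintype.card_fin, Finset.sum_range_succ']
  have hf0 : f 0 = 0 := by simp [f]
  rw [hf0, smul_zero, add_zero]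
  have hbound : ∀ k ∈ Finset.range n, n.choose (k + 1) • f (k + 1) ≤ q * q ^ k := by
    intro k hk
    rw [Finset.mem_range] at hk
    simp only [f, nsmul_eq_mul]
    split_ifs with h
    · have h1 := choose_le_exp (n := n) h.1 (by omega)
      have h2 := log_div_mono (n := n) h.1 h.2 (by omega)
      have hk0 : (0 : ℝ) < (k + 1 : ℕ) := by exact_mod_cast h.1
      refine (mul_le_mul_of_nonneg_right h1 (Real.exp_pos _).le).trans ?_
      rw [← pow_succ', hq, ← Real.exp_nat_mul, ← Real.exp_add]
      apply Real.exp_le_exp.2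
      have h3 := mul_le_mul_of_nonneg_left h2 (mul_nonneg hk0.le (half_pos hε).le)
      linarith
    · rw [mul_zero]
      positivity
  refine (Finset.sum_le_sum hbound).trans ?_
  rw [← Finset.mul_sum, geom_sum_eq (by linarith), mul_comm 2]
  refine mul_le_mul_of_nonneg_left ?_ hq0.le
  rw [div_le_iff_of_neg (by linarith)]
  have := pow_pos hq0 n
  linarith

/-! ### Type II error -/

lemma altW_mem (hp : ∀ i j : Fin n, i ≠ j → p i j ∈ Set.Icc (0 : ℝ) 1) {l : ℝ} (hl : 1 ≤ l)
    {C : Finset (Fin n)} (hlp : ∀ i ∈ C, ∀ j ∈ C, l * p i j ≤ 1) (e : Edge n) :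
    altW n p l C e ∈ Set.Icc (0 : ℝ) 1 := by
  have h := hp _ _ (ne_of_lt e.2)
  unfold altW
  split_ifs with he
  · exact ⟨mul_nonneg (by linarith) h.1, hlp _ he.1 _ he.2⟩
  · exact h

lemma altW_mean {l : ℝ} {C D : Finset (Fin n)} (hDC : D ⊆ C) :
    l * expCount n p D = ∑ e : Edge n, if e.1.1 ∈ D ∧ e.1.2 ∈ D then altW n p l C e else 0 := by
  unfold expCount altW
  rw [Finset.mul_sum]
  refine Finset.sum_congr rfl fun e _ => ?_
  split_ifs with h1 h2
  · rfl
  · exact absurd ⟨hDC h1.1, hDC h1.2⟩ h2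
  all_goals simp

/-- If the signal inside some `D ⊆ C` beats the detection threshold and both `λ E₀[e(D)]` and
`|D| log(n/|D|)` are at least `M`, then the type II error at `C` is exponentially small in `M`. -/
lemma typeII_le (hp : ∀ i j : Fin n, i ≠ j → p i j ∈ Set.Icc (0 : ℝ) 1) {r : ℕ}
    {ε : ℝ} (hε : 0 < ε) {l : ℝ} (hl : 1 ≤ l)
    {C D : Finset (Fin n)} (hC : C.card = r) (hlp : ∀ i ∈ C, ∀ j ∈ C, l * p i j ≤ 1)
    (hDC : D ⊆ C) (hD : D.Nonempty) {M : ℝ} (hM : 0 < M)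
    (hsig : (1 + ε) * (D.card * Real.log ((n : ℝ) / D.card)) ≤ expCount n p D * hFun (l - 1))
    (hlog : M ≤ D.card * Real.log ((n : ℝ) / D.card)) (hmean : M ≤ l * expCount n p D) :
    prob n (altW n p l C) {a | scanTest n r p ε a = false} ≤
      Real.exp (-((ε / (4 * (1 + ε))) ^ 2 * M / 8)) := by
  have hw := altW_mem hp hl hlp
  have hDr : D.card ≤ r := hC ▸ Finset.card_le_card hDC
  set μ := expCount n p D with hμdef
  set η := ε / (4 * (1 + ε)) with hη
  set Λ := (D.card : ℝ) * Real.log ((n : ℝ) / D.card) with hΛ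
  have hη0 : 0 < η := by positivity
  have hη1 : η ≤ 1 := by
    rw [hη, div_le_one (by positivity)]
    linarith
  have hηε : (1 - 2 * η) * (1 + ε) = 1 + ε / 2 := by
    rw [hη]
    field_simp
    ring
  have hη2 : 0 < 1 - 2 * η := by nlinarith
  have hm0 : 0 < l * μ := lt_of_lt_of_le hM hmean
  have hμ : 0 < μ := by
    by_contra h
    nlinarith
  have hΛ0 : 0 < Λ := lt_of_lt_of_le hM hlog
  have hsub : {a | scanTest n r p ε a = false} ⊆
      {a | eCount n D a ≤ l * μ - η * ((l - 1) * μ)} := by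
    intro a ha
    by_contra hlt
    have hlt' : l * μ - η * ((l - 1) * μ) < eCount n D a := not_le.1 hlt
    have ha' : scanTest n r p ε a = false := ha
    unfold scanTest at ha'
    split_ifs at ha' with h
    apply h
    refine le_trans ?_ (le_csSup (scanSet_finite r a).bddAbove ⟨D, hD, hDr, rfl⟩)
    unfold scanStat
    rw [if_pos hμ, le_div_iff₀ hΛ0]
    have h1 : (1 - η) * (l - 1) ≤ max (eCount n D a / μ - 1) 0 := by
      refine le_trans ?_ (le_max_left _ _)
      rw [le_sub_iff_add_le, le_div_iff₀ hμ]
      linarith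
    have h2 := hFun_mono (mul_nonneg (sub_nonneg.2 hη1) (sub_nonneg.2 hl)) h1
    have h3 := (hFun_shrink (sub_nonneg.2 hl) hη0.le hη1).trans h2
    have h4 := mul_le_mul_of_nonneg_left h3 hμ.le
    have h5 := mul_le_mul_of_nonneg_left hsig hη2.le
    rw [← mul_assoc, hηε] at h5
    linarith
  have ht : 0 ≤ η * ((l - 1) * μ) :=
    mul_nonneg hη0.le (mul_nonneg (sub_nonneg.2 hl) hμ.le)
  refine (prob_mono hw hsub).trans ((lower_tail hw D (altW_mean hDC) hm0 ht).trans ?_)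
  apply Real.exp_le_exp.2
  apply neg_le_neg
  -- the deviation exponent is at least of order `M`, by cases on whether `l` is near `1`
  have key : M * l ≤ 4 * ((l - 1) ^ 2 * μ) := by
    rcases le_total l 2 with h2 | h2
    · have h3 := mul_le_mul_of_nonneg_left (hFun_le_sq (sub_nonneg.2 hl)) hμ.le
      have h4 : M ≤ (l - 1) ^ 2 * μ := by nlinarith
      nlinarith
    · have h3 : l ^ 2 ≤ 4 * (l - 1) ^ 2 := by nlinarith
      have h4 := mul_le_mul_of_nonneg_right h3 hμ.le
      nlinarith
  rw [le_div_iff₀ (by positivity)]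
  have h6 := mul_le_mul_of_nonneg_left key (mul_nonneg (sq_nonneg η) hμ.le)
  nlinarith

/-! ### Sets on which the signal is detectable -/

lemma expCount_mono (hp : ∀ i j : Fin n, i ≠ j → p i j ∈ Set.Icc (0 : ℝ) 1)
    {D C : Finset (Fin n)} (h : D ⊆ C) : expCount n p D ≤ expCount n p C := by
  refine Finset.sum_le_sum fun e _ => ?_
  have he := (hp _ _ (ne_of_lt e.2)).1
  split_ifs with h1 h2 h2
  · exact le_rfl
  · exact absurd ⟨h h1.1, h h1.2⟩ h2
  · exact he
  · exact le_rfl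

/-- The number of potential edges inside `D`, as a sum over edges. -/
lemma sum_edges_eq_choose (D : Finset (Fin n)) :
    (∑ e : Edge n, if e.1.1 ∈ D ∧ e.1.2 ∈ D then (1 : ℝ) else 0) = (D.card.choose 2 : ℝ) := by
  classical
  rw [Finset.sum_boole]
  congr 1
  rw [← Finset.card_powersetCard]
  refine Finset.card_bij (fun e _ => ({e.1.1, e.1.2} : Finset (Fin n))) ?_ ?_ ?_
  · intro e he
    simp only [Finset.mem_filter, Finset.mem_univ, true_and] at he
    rw [Finset.mem_powersetCard]
    refine ⟨?_, Finset.card_pair (ne_of_lt e.2)⟩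
    intro x hx
    simp only [Finset.mem_insert, Finset.mem_singleton] at hx
    rcases hx with rfl | rfl
    · exact he.1
    · exact he.2
  · rintro ⟨⟨a, b⟩, hab⟩ _ ⟨⟨c, d⟩, hcd⟩ _ h
    simp only at h hab hcd
    have ha : a ∈ ({c, d} : Finset (Fin n)) := h ▸ Finset.mem_insert_self a {b}
    have hb : b ∈ ({c, d} : Finset (Fin n)) := by rw [← h]; simp
    simp only [Finset.mem_insert, Finset.mem_singleton] at ha hb
    simp only [Subtype.mk.injEq, Prod.mk.injEq]
    omega
  · intro s hs
    rw [Finset.mem_powersetCard] at hs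
    obtain ⟨x, y, hxy, rfl⟩ := Finset.card_eq_two.1 hs.2
    have hx : x ∈ D := hs.1 (by simp)
    have hy : y ∈ D := hs.1 (by simp)
    rcases lt_or_gt_of_ne hxy with h | h
    · exact ⟨⟨(x, y), h⟩, by simp [hx, hy], rfl⟩
    · exact ⟨⟨(y, x), h⟩, by simp [hx, hy], Finset.pair_comm _ _⟩

lemma mul_expCount_le {l : ℝ} {C : Finset (Fin n)} (hlp : ∀ i ∈ C, ∀ j ∈ C, l * p i j ≤ 1) :
    l * expCount n p C ≤ (C.card.choose 2 : ℝ) := by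
  rw [← sum_edges_eq_choose, expCount, Finset.mul_sum]
  refine Finset.sum_le_sum fun e _ => ?_
  split_ifs with h
  · exact hlp _ h.1 _ h.2
  · simp

lemma expCount_eq (D : Finset (Fin n)) (h : 2 ≤ D.card) :
    expCount n p D = pbar n p D * (D.card * (D.card - 1) / 2) := by
  unfold pbar
  rw [Nat.cast_choose_two]
  have : (2 : ℝ) ≤ D.card := by exact_mod_cast h
  have h1 : (D.card : ℝ) ≠ 0 := by linarith
  have h2 : (D.card : ℝ) - 1 ≠ 0 := by linarith
  field_simp

lemma two_le_card {D : Finset (Fin n)} (h : 0 < expCount n p D) : 2 ≤ D.card := by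
  classical
  by_contra hlt
  have h0 : expCount n p D = 0 := by
    refine Finset.sum_eq_zero fun e _ => if_neg fun he => ?_
    exact absurd (Finset.card_le_one.1 (by omega) _ he.1 _ he.2) (ne_of_lt e.2)
  linarith

/-- A nonempty subset of `C` attaining the scan condition. -/
lemma exists_signal {r : ℕ} (hr1 : 1 ≤ r) (hrn : r < n) {ε l : ℝ} {C : Finset (Fin n)}
    (hC : C.card = r) (h : 1 + ε ≤ condSup n p l C) :
    ∃ D ⊆ C, D.Nonempty ∧
      (1 + ε) * (D.card * Real.log ((n : ℝ) / D.card)) ≤ expCount n p D * hFun (l - 1) := by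
  unfold condSup at h
  set S := {x | ∃ D : Finset (Fin n), D ⊆ C ∧ D.Nonempty ∧ x = expCount n p D * hFun (l - 1) /
    ((D.card : ℝ) * Real.log ((n : ℝ) / (D.card : ℝ)))} with hS
  have hfin : S.Finite := by
    refine (Set.finite_range fun D : Finset (Fin n) => expCount n p D * hFun (l - 1) /
      ((D.card : ℝ) * Real.log ((n : ℝ) / (D.card : ℝ)))).subset ?_
    rintro x ⟨D, -, -, rfl⟩
    exact ⟨D, rfl⟩
  have hne : S.Nonempty := ⟨_, C, Finset.Subset.refl _, Finset.card_pos.1 (by omega), rfl⟩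
  obtain ⟨D, hDC, hD, hx⟩ := hne.csSup_mem hfin
  refine ⟨D, hDC, hD, ?_⟩
  have hDr := Finset.card_le_card hDC
  have hlog := log_div_pos (n := n) hD.card_pos (by omega)
  have hk : (0 : ℝ) < D.card := by exact_mod_cast hD.card_pos
  rw [hx, le_div_iff₀ (mul_pos hk hlog)] at h
  exact h

/-- Consequences of the scan condition: the signal forces positive edge density on `C`, a
scaling `l > 1` with `l ≤ 1 / p̄_C`, and enough edges in `D` under the alternative. -/
lemma signal_facts (hp : ∀ i j : Fin n, i ≠ j → p i j ∈ Set.Icc (0 : ℝ) 1) {r : ℕ}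
    (hrn : r < n) {ε l : ℝ} (hε : 0 < ε) (hl : 1 ≤ l) {C D : Finset (Fin n)}
    (hC : C.card = r) (hlp : ∀ i ∈ C, ∀ j ∈ C, l * p i j ≤ 1) (hDC : D ⊆ C) (hD : D.Nonempty)
    (hsig : (1 + ε) * (D.card * Real.log ((n : ℝ) / D.card)) ≤ expCount n p D * hFun (l - 1)) :
    2 ≤ D.card ∧ 0 < expCount n p D ∧ 2 ≤ r ∧ 0 < pbar n p C ∧ 1 < l ∧ l ≤ 1 / pbar n p C ∧
      D.card * Real.log ((n : ℝ) / r) ≤ l * expCount n p D * Real.log l ∧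
      D.card * Real.log ((n : ℝ) / r) ≤ D.card * Real.log ((n : ℝ) / D.card) := by
  have hDr : D.card ≤ r := hC ▸ Finset.card_le_card hDC
  have hk : (0 : ℝ) < D.card := by exact_mod_cast hD.card_pos
  have hlog := log_div_pos (n := n) hD.card_pos (by omega)
  have hmono := mul_le_mul_of_nonneg_left
    (log_div_mono (n := n) hD.card_pos hDr (by omega)) hk.le
  have hpos : 0 < (D.card : ℝ) * Real.log ((n : ℝ) / D.card) := mul_pos hk hlog
  have hprod : D.card * Real.log ((n : ℝ) / D.card) ≤ expCount n p D * hFun (l - 1) := by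
    nlinarith
  have hh0 := hFun_nonneg (sub_nonneg.2 hl)
  have hμ : 0 < expCount n p D := by
    by_contra h
    nlinarith
  have hl1 : 1 < l := by
    rcases hl.lt_or_eq with h | h
    · exact h
    · rw [← h, sub_self, hFun_zero] at hprod
      linarith
  have hD2 := two_le_card hμ
  have hμC : 0 < expCount n p C := hμ.trans_le (expCount_mono hp hDC)
  have hch : (0 : ℝ) < (C.card.choose 2 : ℝ) := by
    exact_mod_cast Nat.choose_pos (two_le_card hμC)
  have hpC : 0 < pbar n p C := div_pos hμC hch
  refine ⟨hD2, hμ, hD2.trans hDr, hpC, hl1, ?_, ?_, hmono⟩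
  · unfold pbar
    rw [one_div_div, le_div_iff₀ hμC]
    exact mul_expCount_le hlp
  · have := mul_le_mul_of_nonneg_left (hFun_sub_one_le hl) hμ.le
    linarith

lemma le_sSup_communities (r : ℕ) (g : Finset (Fin n) → ℝ) {C : Finset (Fin n)}
    (hC : C.card = r) : g C ≤ sSup {x | ∃ C : Finset (Fin n), C.card = r ∧ x = g C} := by
  refine le_csSup (Set.Finite.bddAbove ((Set.finite_range g).subset ?_)) ⟨C, hC, rfl⟩
  rintro x ⟨C, -, rfl⟩
  exact ⟨C, rfl⟩

end Fixed

/-! ### The two asymptotic regimes -/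

section Asymp

variable {p : ∀ n, Fin n → Fin n → ℝ} {r : ℕ → ℕ} {lam : ∀ n, Finset (Fin n) → ℝ}

/-- Under Assumption 1.1, `n / r ≥ r` eventually and `log (n / r) → ∞`. -/
lemma sparse_of_isBigO (hr : ∀ n, 2 ≤ n → 1 ≤ r n ∧ r n < n) {δ : ℝ} (hδ : 0 < δ)
    (h : (fun n => (r n : ℝ)) =O[atTop] fun n => (n : ℝ) ^ ((1 : ℝ)/2 - δ)) :
    (∀ᶠ n in atTop, Real.log (r n) ≤ Real.log ((n : ℝ) / r n)) ∧
      Tendsto (fun n : ℕ => Real.log ((n : ℝ) / r n)) atTop atTop := by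
  obtain ⟨K, hK⟩ := isBigO_iff.1 h
  have hcast : Tendsto (fun n : ℕ => (n : ℝ)) atTop atTop := tendsto_natCast_atTop_atTop
  have hbig : ∀ᶠ n : ℕ in atTop, K ≤ (n : ℝ) ^ δ :=
    ((tendsto_rpow_atTop hδ).comp hcast).eventually_ge_atTop K
  have hmain : ∀ᶠ n : ℕ in atTop, 2 * Real.log (r n) ≤ Real.log n := by
    filter_upwards [hK, hbig, eventually_ge_atTop 2] with n h1 h2 h3
    have hn0 : (0 : ℝ) < n := by exact_mod_cast (by omega : 0 < n)
    have hr0 : (0 : ℝ) < r n := by exact_mod_cast (hr n h3).1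
    rw [Real.norm_of_nonneg hr0.le, Real.norm_of_nonneg (Real.rpow_nonneg hn0.le _)] at h1
    have h4 : (r n : ℝ) ≤ (n : ℝ) ^ ((1 : ℝ) / 2) := by
      calc (r n : ℝ) ≤ K * (n : ℝ) ^ ((1 : ℝ)/2 - δ) := h1
        _ ≤ (n : ℝ) ^ δ * (n : ℝ) ^ ((1 : ℝ)/2 - δ) :=
          mul_le_mul_of_nonneg_right h2 (Real.rpow_nonneg hn0.le _)
        _ = (n : ℝ) ^ ((1 : ℝ) / 2) := by
          rw [← Real.rpow_add hn0]
          congr 1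
          ring
    have h5 := Real.log_le_log hr0 h4
    rw [Real.log_rpow hn0] at h5
    linarith
  have hsplit : ∀ n : ℕ, 2 ≤ n → Real.log ((n : ℝ) / r n) = Real.log n - Real.log (r n) := by
    intro n h3
    have hn0 : (0 : ℝ) < n := by exact_mod_cast (by omega : 0 < n)
    have hr0 : (0 : ℝ) < r n := by exact_mod_cast (hr n h3).1
    exact Real.log_div hn0.ne' hr0.ne'
  constructor
  · filter_upwards [hmain, eventually_ge_atTop 2] with n h1 h3
    rw [hsplit n h3]
    linarith
  · refine tendsto_atTop_mono' _ ?_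
      ((Real.tendsto_log_atTop.comp hcast).atTop_div_const (by norm_num : (0 : ℝ) < 2))
    filter_upwards [hmain, eventually_ge_atTop 2] with n h1 h3
    rw [hsplit n h3]
    simp only [Function.comp]
    linarith

/-- Under Assumption 1.2, `log (n / r) → ∞`. -/
lemma tendsto_log_of_ratio (hr : ∀ n, 2 ≤ n → 1 ≤ r n ∧ r n < n)
    (h : Tendsto (fun n => Real.log (r n : ℝ) / Real.log (n : ℝ)) atTop (nhds 0)) :
    Tendsto (fun n : ℕ => Real.log ((n : ℝ) / r n)) atTop atTop := by
  have hcast : Tendsto (fun n : ℕ => (n : ℝ)) atTop atTop := tendsto_natCast_atTop_atTop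
  refine tendsto_atTop_mono' _ ?_
    ((Real.tendsto_log_atTop.comp hcast).atTop_div_const (by norm_num : (0 : ℝ) < 2))
  filter_upwards [h.eventually_le_const (by norm_num : (0 : ℝ) < 1 / 2),
    eventually_ge_atTop 2] with n h1 h3
  have hn1 : (1 : ℝ) < n := by exact_mod_cast (by omega : 1 < n)
  have hr0 : (0 : ℝ) < r n := by exact_mod_cast (hr n h3).1
  rw [div_le_iff₀ (Real.log_pos hn1)] at h1
  rw [Real.log_div (by linarith) hr0.ne']
  simp only [Function.comp]
  linarith

/-- `D ⊆ C` carries a signal above the detection threshold, and at least `M` edges are expected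
inside `D` under the alternative. -/
def GoodSet (n : ℕ) (p : Fin n → Fin n → ℝ) (l ε M : ℝ) (C D : Finset (Fin n)) : Prop :=
  D ⊆ C ∧ D.Nonempty ∧
    (1 + ε) * (D.card * Real.log ((n : ℝ) / D.card)) ≤ expCount n p D * hFun (l - 1) ∧
    M ≤ l * expCount n p D

/-- In the regime of Assumption 1.2, `log λ = o(log(n/r) / log r)`, so that
`λ E₀[e(D)] ≥ |D| log(n/|D|) / log λ → ∞` for every `D` attaining the scan condition. -/
lemma exists_good_of_12 (hp : ∀ n, ∀ i j : Fin n, i ≠ j → p n i j ∈ Set.Icc (0 : ℝ) 1)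
    (hr : ∀ n, 2 ≤ n → 1 ≤ r n ∧ r n < n)
    (hlam : ∀ n, ∀ C : Finset (Fin n), C.card = r n → 1 ≤ lam n C)
    (hlamp : ∀ n, ∀ C : Finset (Fin n), C.card = r n →
      ∀ i ∈ C, ∀ j ∈ C, lam n C * p n i j ≤ 1)
    (hA : Assumption12 p r) {ε : ℝ} (hε : 0 < ε)
    (hcond : ∀ᶠ n in atTop, ∀ C : Finset (Fin n), C.card = r n →
      1 + ε ≤ condSup n (p n) (lam n C) C) {M : ℝ} (hM : 0 < M) :
    ∀ᶠ n in atTop, ∀ C : Finset (Fin n), C.card = r n →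
      ∃ D, GoodSet n (p n) (lam n C) ε M C D := by
  have hlog2 : 0 < Real.log 2 := Real.log_pos (by norm_num)
  filter_upwards [hcond, hA.2.def (div_pos hlog2 hM), eventually_ge_atTop 2] with n hc ho hn C hC
  obtain ⟨hr1, hrn⟩ := hr n hn
  obtain ⟨D, hDC, hD, hsig⟩ := exists_signal hr1 hrn hC (hc C hC)
  refine ⟨D, hDC, hD, hsig, ?_⟩
  obtain ⟨hD2, hμ, hr2, hpC, hl1, hlC, hmain, -⟩ :=
    signal_facts (hp n) hrn hε (hlam n C hC) hC (hlamp n C hC) hDC hD hsig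
  have hL : 0 < Real.log ((n : ℝ) / r n) := log_div_pos hr1 hrn
  have hx : Real.log 2 ≤ Real.log (r n) :=
    Real.log_le_log (by norm_num) (by exact_mod_cast hr2)
  have hx0 : 0 < Real.log (r n) := hlog2.trans_le hx
  have hk : (1 : ℝ) ≤ D.card := by exact_mod_cast hD.card_pos
  have h1 : Real.log (lam n C) ≤ Real.log (1 / pbar n (p n) C) :=
    Real.log_le_log (by linarith) hlC
  have h2 := le_sSup_communities (r n) (fun C => Real.log (1 / pbar n (p n) C)) hC
  have h3 := (le_abs_self _).trans ho
  rw [Real.norm_of_nonneg (div_nonneg hL.le hx0.le)] at h3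
  have h4 := h1.trans (h2.trans h3)
  have hm0 : 0 < lam n C * expCount n (p n) D := mul_pos (by linarith) hμ
  have h5 := mul_le_mul_of_nonneg_left h4 hm0.le
  have h6 : Real.log ((n : ℝ) / r n) ≤ D.card * Real.log ((n : ℝ) / r n) := by nlinarith
  have h7 : Real.log ((n : ℝ) / r n) * 1 ≤ Real.log ((n : ℝ) / r n) *
      (lam n C * expCount n (p n) D * (Real.log 2 / M / Real.log (r n))) := by
    rw [mul_one]
    refine (h6.trans (hmain.trans h5)).trans_eq ?_
    ring
  have h8 := le_of_mul_le_mul_left h7 hL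
  rw [div_div, mul_div_assoc', le_div_iff₀ (mul_pos hM hx0), one_mul] at h8
  have h9 : M * Real.log 2 ≤ M * Real.log (r n) := mul_le_mul_of_nonneg_left hx hM.le
  exact le_of_mul_le_mul_right (h9.trans h8) hlog2

/-- In the regime of Assumption 1.1, `λ ≤ r`. A small `D` attaining the scan condition can be
replaced by `C` itself; a set `D` with `log |D| ≥ log r - γ log(n/r)` has
`λ E₀[e(D)] ≥ |D| log(n/r) / log r → ∞`. -/
lemma exists_good_of_11 (hp : ∀ n, ∀ i j : Fin n, i ≠ j → p n i j ∈ Set.Icc (0 : ℝ) 1)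
    (hr : ∀ n, 2 ≤ n → 1 ≤ r n ∧ r n < n)
    (hlam : ∀ n, ∀ C : Finset (Fin n), C.card = r n → 1 ≤ lam n C)
    (hlamp : ∀ n, ∀ C : Finset (Fin n), C.card = r n →
      ∀ i ∈ C, ∀ j ∈ C, lam n C * p n i j ≤ 1)
    (hA : Assumption11 p r) {ε : ℝ} (hε : 0 < ε)
    (hcond : ∀ᶠ n in atTop, ∀ C : Finset (Fin n), C.card = r n →
      1 + ε ≤ condSup n (p n) (lam n C) C) {M : ℝ} (hM : 0 < M) :
    ∀ᶠ n in atTop, ∀ C : Finset (Fin n), C.card = r n →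
      ∃ D, GoodSet n (p n) (lam n C) ε M C D := by
  obtain ⟨δ, ⟨hδ0, hδ2⟩, hbigO, ⟨γ, hγ0, hγ, hii⟩, hiii⟩ := hA
  obtain ⟨hxL, hLtop⟩ := sparse_of_isBigO hr hδ0 hbigO
  have hexp : ∀ᶠ n : ℕ in atTop, M ≤ Real.exp (Real.log ((n : ℝ) / r n) / (2 * M)) :=
    (Real.tendsto_exp_atTop.comp
      (hLtop.atTop_div_const (by positivity : 0 < 2 * M))).eventually_ge_atTop M
  filter_upwards [hcond, hiii.def one_pos, hxL, hLtop.eventually_ge_atTop 1, hexp,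
    hγ.eventually_le_const (by positivity : (0 : ℝ) < 1 / (2 * M)), eventually_ge_atTop 2]
    with n hc ho hxL hL1 hexp hγn hn C hC
  obtain ⟨hr1, hrn⟩ := hr n hn
  obtain ⟨D₀, hDC₀, hD₀, hsig₀⟩ := exists_signal hr1 hrn hC (hc C hC)
  obtain ⟨hD2, hμ₀, hr2, hpC, hl1, hlC, -, hmono₀⟩ :=
    signal_facts (hp n) hrn hε (hlam n C hC) hC (hlamp n C hC) hDC₀ hD₀ hsig₀
  set L := Real.log ((n : ℝ) / r n) with hLdef
  set x := Real.log (r n : ℝ) with hxdef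
  have hn0 : (0 : ℝ) < n := by exact_mod_cast (by omega : 0 < n)
  have hr2' : (2 : ℝ) ≤ r n := by exact_mod_cast hr2
  have hr0 : (0 : ℝ) < r n := by linarith
  have hx0 : 0 < x := Real.log_pos (by linarith)
  have hL0 : 0 < L := by linarith
  have hnr : 0 < (n : ℝ) / r n := by positivity
  -- the scaling is at most `r`
  have hlx : Real.log (lam n C) ≤ x := by
    refine Real.log_le_log (by linarith) ?_
    have h2 := le_sSup_communities (r n) (fun C => 1 / pbar n (p n) C) hC
    have h3 := (le_abs_self _).trans ho
    rw [Real.norm_of_nonneg (div_nonneg hr0.le hL0.le), one_mul] at h3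
    exact hlC.trans (h2.trans (h3.trans (div_le_self hr0.le hL1)))
  -- a set attaining the scan condition that is not too small
  obtain ⟨D, hDC, hD, hsig, hcard⟩ : ∃ D ⊆ C, D.Nonempty ∧
      (1 + ε) * (D.card * Real.log ((n : ℝ) / D.card)) ≤
        expCount n (p n) D * hFun (lam n C - 1) ∧ x - γ n * L ≤ Real.log D.card := by
    by_cases hsmall : (D₀.card : ℝ) < (r n : ℝ) / ((n : ℝ) / (r n : ℝ)) ^ (γ n)
    · refine ⟨C, Finset.Subset.refl _, hD₀.mono hDC₀, ?_, ?_⟩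
      · have h1 := hii n C hC D₀ hDC₀ hD₀ hsmall
        rw [div_le_iff₀ (mul_pos hr0 hpC)] at h1
        have hk2 : (2 : ℝ) ≤ D₀.card := by exact_mod_cast hD2
        have hh := hFun_nonneg (by linarith : 0 ≤ lam n C - 1)
        have hp0 : 0 ≤ pbar n (p n) D₀ := div_nonneg hμ₀.le (Nat.cast_nonneg _)
        rw [hC, expCount_eq C (hC ▸ hr2), hC]
        rw [expCount_eq D₀ hD2] at hsig₀
        set k : ℝ := (D₀.card : ℝ)
        have h2 : (1 + ε) * L * 2 ≤ k * pbar n (p n) D₀ * hFun (lam n C - 1) := by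
          have h3 := mul_le_mul_of_nonneg_left hmono₀ (by linarith : 0 ≤ 1 + ε)
          have h4 : k * ((1 + ε) * L * 2) ≤
              k * ((k - 1) * (pbar n (p n) D₀ * hFun (lam n C - 1))) := by linarith
          have h5 := le_of_mul_le_mul_left h4 (by linarith)
          have h6 : 0 ≤ pbar n (p n) D₀ * hFun (lam n C - 1) := mul_nonneg hp0 hh
          linarith
        -- here `2 δ ≤ 1` and `r ≤ 2 (r - 1)` are used
        have h7 : k * pbar n (p n) D₀ ≤ ((r n : ℝ) - 1) * pbar n (p n) C := by
          nlinarith [mul_pos hr0 hpC]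
        have h8 := h2.trans (mul_le_mul_of_nonneg_right h7 hh)
        have h9 := mul_le_mul_of_nonneg_left h8 hr0.le
        linarith
      · rw [hC]
        have := mul_pos (hγ0 n) hL0
        linarith
    · refine ⟨D₀, hDC₀, hD₀, hsig₀, ?_⟩
      have h1 := Real.log_le_log (by positivity) (not_lt.1 hsmall)
      rw [Real.log_div hr0.ne' (by positivity), Real.log_rpow hnr] at h1
      exact h1
  refine ⟨D, hDC, hD, hsig, ?_⟩
  obtain ⟨hD2, hμ, -, -, -, -, hmain, -⟩ :=
    signal_facts (hp n) hrn hε (hlam n C hC) hC (hlamp n C hC) hDC hD hsig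
  have hm0 : 0 < lam n C * expCount n (p n) D := mul_pos (by linarith) hμ
  have h1 : D.card * L ≤ lam n C * expCount n (p n) D * x :=
    hmain.trans (mul_le_mul_of_nonneg_left hlx hm0.le)
  have hk1 : (1 : ℝ) ≤ D.card := by exact_mod_cast hD.card_pos
  refine le_of_mul_le_mul_right (le_trans ?_ h1) hx0
  rcases le_total (M * x) L with hcase | hcase
  · nlinarith
  · -- `r` is polynomially large, hence so is `D`
    have h2 : L / (2 * M) ≤ x / 2 := by
      rw [div_le_iff₀ (by positivity)]
      linarith
    have h3 : γ n * L ≤ L / (2 * M) := by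
      have := mul_le_mul_of_nonneg_right hγn hL0.le
      calc _ ≤ _ := this
        _ = _ := by ring
    have h4 : Real.exp (L / (2 * M)) ≤ D.card := by
      rw [← Real.le_log_iff_exp_le (by linarith)]
      linarith
    have h5 : M ≤ D.card := hexp.trans h4
    calc M * x ≤ D.card * x := mul_le_mul_of_nonneg_right h5 hx0.le
      _ ≤ D.card * L := mul_le_mul_of_nonneg_left hxL (by linarith)

end Asymp

/-- **Corollary 1.** Under either Assumption 1.1 or Assumption 1.2, if eventually every
community `C` of size `r n` satisfies the scan condition
`max_{∅ ≠ D ⊆ C} E₀[e(D)] h(λ_C - 1)/(|D| log(n/|D|)) ≥ 1 + ε`, then the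
known-probability scan test with parameter `ε` is asymptotically powerful. -/
theorem known_scan_test_powerful_corollary
    (p : ∀ n, Fin n → Fin n → ℝ) (r : ℕ → ℕ) (lam : ∀ n, Finset (Fin n) → ℝ)
    (hp : ∀ n, ∀ i j : Fin n, i ≠ j → p n i j ∈ Set.Icc (0 : ℝ) 1)
    (hsymm : ∀ n, ∀ i j : Fin n, p n i j = p n j i)
    (hr : ∀ n, 2 ≤ n → 1 ≤ r n ∧ r n < n)
    (hlam : ∀ n, ∀ C : Finset (Fin n), C.card = r n → 1 ≤ lam n C)
    (hlamp : ∀ n, ∀ C : Finset (Fin n), C.card = r n →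
      ∀ i ∈ C, ∀ j ∈ C, lam n C * p n i j ≤ 1)
    (hA1 : Assumption11 p r ∨ Assumption12 p r)
    (ε : ℝ) (hε : 0 < ε)
    (hcond : ∀ᶠ n in atTop, ∀ C : Finset (Fin n), C.card = r n →
      1 + ε ≤ condSup n (p n) (lam n C) C) :
    Tendsto (fun n => risk n (r n) (p n) (lam n) (scanTest n (r n) (p n) ε)) atTop (nhds 0) := by
  have hLtop : Tendsto (fun n : ℕ => Real.log ((n : ℝ) / r n)) atTop atTop := by
    rcases hA1 with ⟨δ, hδ, hO, -⟩ | hA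
    · exact (sparse_of_isBigO hr hδ.1 hO).2
    · exact tendsto_log_of_ratio hr hA.1
  have hgood : ∀ M : ℝ, 0 < M → ∀ᶠ n in atTop, ∀ C : Finset (Fin n), C.card = r n →
      ∃ D, GoodSet n (p n) (lam n C) ε M C D := by
    intro M hM
    rcases hA1 with hA | hA
    · exact exists_good_of_11 hp hr hlam hlamp hA hε hcond hM
    · exact exists_good_of_12 hp hr hlam hlamp hA hε hcond hM
  have hq : Tendsto (fun n : ℕ => Real.exp (1 - ε / 2 * Real.log ((n : ℝ) / r n))) atTop
      (nhds 0) := by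
    refine Real.tendsto_exp_atBot.comp ?_
    have h1 := tendsto_atBot_add_const_left atTop (1 : ℝ)
      (tendsto_neg_atTop_atBot.comp (hLtop.const_mul_atTop (half_pos hε)))
    exact h1.congr fun n => by simp [sub_eq_add_neg]
  rw [Metric.tendsto_nhds]
  intro τ hτ
  -- `M` is chosen so that the type II error bound is below `τ / 2`
  obtain ⟨M, hM, hMτ⟩ : ∃ M : ℝ, 0 < M ∧
      Real.exp (-((ε / (4 * (1 + ε))) ^ 2 * M / 8)) < τ / 2 := by
    have h1 : Tendsto (fun M : ℝ => Real.exp (-((ε / (4 * (1 + ε))) ^ 2 * M / 8))) atTop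
        (nhds 0) :=
      Real.tendsto_exp_neg_atTop_nhds_zero.comp
        ((tendsto_id.const_mul_atTop (by positivity : 0 < (ε / (4 * (1 + ε))) ^ 2)).atTop_div_const
          (by norm_num))
    exact ((eventually_gt_atTop 0).and (h1.eventually_lt_const (half_pos hτ))).exists
  filter_upwards [hgood M hM, hq.eventually_le_const (by norm_num : (0 : ℝ) < 1 / 2),
    hq.eventually_lt_const (by positivity : (0 : ℝ) < τ / 4), hLtop.eventually_ge_atTop M,
    eventually_ge_atTop 2] with n hg hq2 hqτ hLM hn
  obtain ⟨hr1, hrn⟩ := hr n hn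
  have hI := typeI_le (hp n) hr1 hrn hε rfl hq2
  have hI0 := prob_nonneg (nullW_mem (hp n)) {a | scanTest n (r n) (p n) ε a = true}
  have hII : sSup {x | ∃ C : Finset (Fin n), C.card = r n ∧
      x = prob n (altW n (p n) (lam n C) C) {a | scanTest n (r n) (p n) ε a = false}} ≤
      Real.exp (-((ε / (4 * (1 + ε))) ^ 2 * M / 8)) := by
    refine Real.sSup_le ?_ (Real.exp_pos _).le
    rintro x ⟨C, hC, rfl⟩
    obtain ⟨D, hDC, hD, hsig, hmean⟩ := hg C hC
    obtain ⟨-, -, -, -, -, -, -, hmono⟩ :=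
      signal_facts (hp n) hrn hε (hlam n C hC) hC (hlamp n C hC) hDC hD hsig
    have hk1 : (1 : ℝ) ≤ D.card := by exact_mod_cast hD.card_pos
    refine typeII_le (hp n) hε (hlam n C hC) hC (hlamp n C hC) hDC hD hM hsig ?_ hmean
    nlinarith
  have hII0 : 0 ≤ sSup {x | ∃ C : Finset (Fin n), C.card = r n ∧
      x = prob n (altW n (p n) (lam n C) C) {a | scanTest n (r n) (p n) ε a = false}} := by
    refine Real.sSup_nonneg ?_
    rintro x ⟨C, hC, rfl⟩
    exact prob_nonneg (altW_mem (hp n) (hlam n C hC) (hlamp n C hC)) _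
  unfold risk
  rw [Real.dist_eq, sub_zero, abs_of_nonneg (add_nonneg hI0 hII0)]
  linarith

end CommunityDetection
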